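/- Let ω > 0, μ > 0 and λ ∈ ℝ with λ + μ ≥ 0, and set k_p = ω/√(λ+2μ) and k_s = ω/√μ. Then for every nonzero r ∈ ℝ² one has the 2×2 matrix identity (1/(8π)) [ (1/(λ+2μ)) ∫₀^{2π} d(θ)⊗d(θ) e^{i k_p r·d(θ)} dθ + (1/μ) ∫₀^{2π} (I − d(θ)⊗d(θ)) e^{i k_s r·d(θ)} dθ ] = (1/(4μ)) [ F₁(|r|) I + F₂(|r|) r̂⊗r̂ ], where d(θ) = (cos θ, sin θ), r̂ = r/|r|, F₁(t) = J₀(k_s t) − (1/(k_s t))(J₁(k_s t) − (k_p/k_s) J₁(k_p t)) and F₂(t) = (2/(k_s t)) J₁(k_s t) − J₀(k_s t) − (2 k_p/(k_s² t)) J₁(k_p t) + (k_p²/k_s²) J₀(k_p t). -/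

import Mathlib

/-- Bessel function of the first kind of order zero, defined by its power series. -/
noncomputable def J0 (t : ℝ) : ℝ :=
  ∑' p : ℕ, (-1 : ℝ) ^ p / ((Nat.factorial p : ℝ) ^ 2) * (t / 2) ^ (2 * p)

/-- Bessel function of the first kind of order one, defined by its power series. -/
noncomputable def J1 (t : ℝ) : ℝ :=
  ∑' p : ℕ, (-1 : ℝ) ^ p / ((Nat.factorial p : ℝ) * (Nat.factorial (p + 1) : ℝ)) *
    (t / 2) ^ (2 * p + 1)

/-- The unit direction `d(θ) = (cos θ, sin θ)` as a vector in `ℝ²`. -/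
noncomputable def dir (θ : ℝ) : Fin 2 → ℝ := ![Real.cos θ, Real.sin θ]

/-- Euclidean norm of a vector in `ℝ²`. -/
noncomputable def nrm (r : Fin 2 → ℝ) : ℝ := Real.sqrt (r 0 ^ 2 + r 1 ^ 2)

/-- The coefficient `F₁` in the closed-form expression of `Im Π`. -/
noncomputable def F1 (kp ks t : ℝ) : ℝ :=
  J0 (ks * t) - (1 / (ks * t)) * (J1 (ks * t) - (kp / ks) * J1 (kp * t))

/-- The coefficient `F₂` in the closed-form expression of `Im Π`. -/
noncomputable def F2 (kp ks t : ℝ) : ℝ :=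
  (2 / (ks * t)) * J1 (ks * t) - J0 (ks * t) - (2 * kp / (ks ^ 2 * t)) * J1 (kp * t) +
    (kp ^ 2 / ks ^ 2) * J0 (kp * t)

/-!
Rotating the circle so that `r = |r| d(φ)` turns the phase into `k |r| cos θ`, while
`d(θ + φ) = cos θ d(φ) + sin θ d(φ + π/2)`. The mixed part of `d ⊗ d` integrates to zero by the
reflection `θ ↦ 2π - θ`, and the diagonal part only involves the integrals of `e^{ix cos θ}` and
`sin² θ e^{ix cos θ}` over the circle. The first is `2π J₀(x)`, by expanding the exponential and
using the moments of `cos`; the second is `2π J₁(x) / x`, by an integration by parts that reduces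
it to the integral of `cos θ e^{ix cos θ}`. The relation `(λ + 2μ) k_p² = μ k_s²` then matches the
compressional and shear contributions.
-/

open scoped Real

lemma hasSum_intervalIntegral_mul_exp {a b : ℝ} {f g : ℝ → ℂ}
    (hf : ContinuousOn f (Set.uIcc a b)) (hg : IntervalIntegrable g MeasureTheory.volume a b) :
    HasSum (fun n : ℕ => ∫ θ in a..b, g θ * (f θ ^ n / n.factorial))
      (∫ θ in a..b, g θ * Complex.exp (f θ)) := by
  obtain ⟨M, hM⟩ := isCompact_uIcc.exists_bound_of_continuousOn hf
  have hfM : ∀ θ ∈ Set.uIoc a b, ‖f θ‖ ≤ M := fun θ hθ => hM θ (Set.uIoc_subset_uIcc hθ)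
  have hfm := (hf.mono Set.uIoc_subset_uIcc).aestronglyMeasurable (μ := MeasureTheory.volume)
    measurableSet_uIoc
  refine intervalIntegral.hasSum_integral_of_dominated_convergence
    (fun n θ => ‖g θ‖ * (M ^ n / n.factorial)) (fun n => ?_) (fun n => .of_forall fun θ hθ => ?_)
    (.of_forall fun θ _ => (Real.summable_pow_div_factorial M).mul_left _) ?_
    (.of_forall fun θ _ => ?_)
  · simp only [div_eq_mul_inv]
    exact hg.aestronglyMeasurable_restrict_uIoc.mul ((hfm.pow n).mul_const _)
  · rw [norm_mul, norm_div, norm_pow, Complex.norm_natCast]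
    gcongr
    exact hfM θ hθ
  · simp only [tsum_mul_left]
    exact hg.norm.mul_const _
  · rw [Complex.exp_eq_exp_ℂ]
    exact (NormedSpace.expSeries_div_hasSum_exp (f θ)).mul_left (g θ)

lemma integral_comp_add_right_of_periodic {E : Type*} [NormedAddCommGroup E] [NormedSpace ℝ E]
    {f : ℝ → E} {T : ℝ} (hf : Function.Periodic f T) (c : ℝ) :
    ∫ θ in (0 : ℝ)..T, f (θ + c) = ∫ θ in (0 : ℝ)..T, f θ := by
  simpa only [intervalIntegral.integral_comp_add_right, zero_add, add_comm T c]
    using hf.intervalIntegral_add_eq c 0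

lemma integral_sin_smul_comp_cos {E : Type*} [NormedAddCommGroup E] [NormedSpace ℝ E]
    (f : ℝ → E) : ∫ θ in (0 : ℝ)..2 * π, Real.sin θ • f (Real.cos θ) = 0 := by
  have reflection := intervalIntegral.integral_comp_sub_left (a := 0) (b := 2 * π)
    (fun θ => Real.sin θ • f (Real.cos θ)) (2 * π)
  simp only [Real.sin_two_pi_sub, Real.cos_two_pi_sub, sub_self, sub_zero, neg_smul,
    intervalIntegral.integral_neg] at reflection
  have : IsAddTorsionFree E := .of_isTorsionFree ℝ E
  exact self_eq_neg.mp reflection.symm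

lemma integral_cos_pow_add_two (n : ℕ) :
    ∫ θ in (0 : ℝ)..2 * π, Real.cos θ ^ (n + 2) =
      (n + 1) / (n + 2) * ∫ θ in (0 : ℝ)..2 * π, Real.cos θ ^ n := by
  simp [integral_cos_pow]

lemma integral_cos_pow_even (p : ℕ) :
    ∫ θ in (0 : ℝ)..2 * π, Real.cos θ ^ (2 * p) =
      2 * π * ((2 * p).factorial / (2 ^ (2 * p) * (p.factorial : ℝ) ^ 2)) := by
  induction p with
  | zero => simp
  | succ p ih =>
    rw [mul_add_one, integral_cos_pow_add_two, ih]
    simp only [Nat.factorial_succ]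
    push_cast
    field_simp
    ring

lemma integral_cos_pow_odd (p : ℕ) : ∫ θ in (0 : ℝ)..2 * π, Real.cos θ ^ (2 * p + 1) = 0 := by
  induction p with
  | zero => simp
  | succ p ih =>
    rw [show 2 * (p + 1) + 1 = 2 * p + 1 + 2 by ring, integral_cos_pow_add_two, ih, mul_zero]

lemma hasSum_integral_cos_pow_mul_exp_I_mul_cos (m : ℕ) (x : ℝ) :
    HasSum (fun n : ℕ => (Complex.I * x) ^ n / n.factorial *
        ((∫ θ in (0 : ℝ)..2 * π, Real.cos θ ^ (n + m) : ℝ) : ℂ))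
      (∫ θ in (0 : ℝ)..2 * π,
        (Real.cos θ : ℂ) ^ m * Complex.exp (Complex.I * (x * Real.cos θ : ℝ))) := by
  have expansion := hasSum_intervalIntegral_mul_exp (a := 0) (b := 2 * π)
    (f := fun θ => Complex.I * (x * Real.cos θ : ℝ)) (g := fun θ => (Real.cos θ : ℂ) ^ m)
    (by fun_prop) (Continuous.intervalIntegrable (by fun_prop) _ _)
  refine expansion.congr_fun fun n => ?_
  rw [← intervalIntegral.integral_ofReal, ← intervalIntegral.integral_const_mul]
  congr 1 with θ
  push_cast
  ring

lemma integral_exp_I_mul_cos (x : ℝ) :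
    ∫ θ in (0 : ℝ)..2 * π, Complex.exp (Complex.I * (x * Real.cos θ : ℝ)) =
      (2 * π * J0 x : ℝ) := by
  have series := hasSum_integral_cos_pow_mul_exp_I_mul_cos 0 x
  simp only [pow_zero, one_mul, add_zero] at series
  rw [← (mul_right_injective₀ (two_ne_zero (α := ℕ))).hasSum_iff] at series
  · rw [← series.tsum_eq, J0, ← tsum_mul_left, Complex.ofReal_tsum]
    refine tsum_congr fun p => ?_
    rw [Function.comp_apply, integral_cos_pow_even, mul_pow, pow_mul Complex.I, Complex.I_sq,
      div_pow]
    push_cast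
    have : ((2 * p).factorial : ℂ) ≠ 0 := mod_cast (2 * p).factorial_ne_zero
    field_simp
  · intro n hn
    obtain ⟨p, rfl | rfl⟩ := n.even_or_odd'
    · exact absurd ⟨p, rfl⟩ hn
    · simp [integral_cos_pow_odd]

lemma integral_cos_mul_exp_I_mul_cos (x : ℝ) :
    ∫ θ in (0 : ℝ)..2 * π,
        (Real.cos θ : ℂ) * Complex.exp (Complex.I * (x * Real.cos θ : ℝ)) =
      Complex.I * (2 * π * J1 x : ℝ) := by
  have series := hasSum_integral_cos_pow_mul_exp_I_mul_cos 1 x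
  simp only [pow_one] at series
  have inj : Function.Injective fun p : ℕ => 2 * p + 1 := fun p q h => by simpa using h
  rw [← inj.hasSum_iff] at series
  · rw [← series.tsum_eq, J1, ← tsum_mul_left, Complex.ofReal_tsum, ← tsum_mul_left]
    refine tsum_congr fun p => ?_
    rw [Function.comp_apply, show 2 * p + 1 + 1 = 2 * (p + 1) by ring, integral_cos_pow_even,
      mul_pow, pow_succ Complex.I, pow_mul Complex.I, Complex.I_sq, div_pow, mul_add_one]
    simp only [Nat.factorial_succ]
    push_cast
    have : ((2 * p).factorial : ℂ) ≠ 0 := mod_cast (2 * p).factorial_ne_zero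
    have : (2 * p + 1 : ℂ) ≠ 0 := mod_cast (2 * p).succ_ne_zero
    field_simp
    ring
  · intro n hn
    obtain ⟨p, rfl | rfl⟩ := n.even_or_odd'
    · simp [integral_cos_pow_odd]
    · exact absurd ⟨p, rfl⟩ hn

lemma mul_integral_sin_sq_mul_exp_I_mul_cos (x : ℝ) :
    x * ∫ θ in (0 : ℝ)..2 * π,
        (Real.sin θ : ℂ) ^ 2 * Complex.exp (Complex.I * (x * Real.cos θ : ℝ)) =
      (2 * π * J1 x : ℝ) := by
  have parts := intervalIntegral.integral_mul_deriv_eq_deriv_mul (a := 0) (b := 2 * π)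
    (u := fun θ => (Real.sin θ : ℂ)) (u' := fun θ => (Real.cos θ : ℂ))
    (v := fun θ => Complex.exp (Complex.I * (x * Real.cos θ : ℝ)))
    (v' := fun θ => Complex.exp (Complex.I * (x * Real.cos θ : ℝ)) *
      (Complex.I * (x * -Real.sin θ : ℝ)))
    (fun θ _ => (Real.hasDerivAt_sin θ).ofReal_comp)
    (fun θ _ => (((Real.hasDerivAt_cos θ).const_mul x).ofReal_comp.const_mul Complex.I).cexp)
    (Continuous.intervalIntegrable (by fun_prop) _ _)
    (Continuous.intervalIntegrable (by fun_prop) _ _)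
  rw [integral_cos_mul_exp_I_mul_cos, Real.sin_two_pi, Real.sin_zero] at parts
  apply mul_left_cancel₀ (neg_ne_zero.mpr Complex.I_ne_zero)
  calc -Complex.I * (x * ∫ θ in (0 : ℝ)..2 * π,
          (Real.sin θ : ℂ) ^ 2 * Complex.exp (Complex.I * (x * Real.cos θ : ℝ)))
      = ∫ θ in (0 : ℝ)..2 * π, (Real.sin θ : ℂ) *
          (Complex.exp (Complex.I * (x * Real.cos θ : ℝ)) *
            (Complex.I * (x * -Real.sin θ : ℝ))) := by
        simp only [← intervalIntegral.integral_const_mul]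
        congr 1 with θ
        push_cast
        ring
    _ = -Complex.I * (2 * π * J1 x : ℝ) := by
        rw [parts]
        push_cast
        ring

lemma dir_add_apply (θ φ : ℝ) (i : Fin 2) :
    dir (θ + φ) i = Real.cos θ * dir φ i + Real.sin θ * dir (φ + π / 2) i := by
  fin_cases i <;> simp [dir, Real.cos_add, Real.sin_add, sub_eq_add_neg, add_comm]

lemma dir_mul_dir_add_orthogonal (φ : ℝ) (i j : Fin 2) :
    dir φ i * dir φ j + dir (φ + π / 2) i * dir (φ + π / 2) j = if i = j then 1 else 0 := by
  fin_cases i <;> fin_cases j <;>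
    simp [dir, Real.cos_add_pi_div_two, Real.sin_add_pi_div_two, ← sq, mul_comm]

lemma integral_dir_mul_dir_mul_exp_I_mul_cos {x : ℝ} (hx : x ≠ 0) (φ : ℝ) (i j : Fin 2) :
    ∫ θ in (0 : ℝ)..2 * π, ((dir (θ + φ) i * dir (θ + φ) j : ℝ) : ℂ) *
        Complex.exp (Complex.I * (x * Real.cos θ : ℝ)) =
      (2 * π * (J1 x / x * (if i = j then 1 else 0) +
        (J0 x - 2 * (J1 x / x)) * (dir φ i * dir φ j)) : ℝ) := by
  let n := dir φ
  let t := dir (φ + π / 2)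
  let e : ℝ → ℂ := fun θ => Complex.exp (Complex.I * (x * Real.cos θ : ℝ))
  have decomposition : ∀ θ, ((dir (θ + φ) i * dir (θ + φ) j : ℝ) : ℂ) * e θ =
      (n i * n j : ℝ) * e θ + (t i * t j - n i * n j : ℝ) * ((Real.sin θ : ℂ) ^ 2 * e θ) +
        (n i * t j + t i * n j : ℝ) * (Real.sin θ • (Real.cos θ * e θ)) := by
    intro θ
    rw [dir_add_apply θ φ i, dir_add_apply θ φ j, Complex.real_smul]
    have := Complex.cos_sq_add_sin_sq θ
    push_cast
    linear_combination (n i : ℂ) * n j * e θ * this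
  have integral_e : ∫ θ in (0 : ℝ)..2 * π, e θ = (2 * π * J0 x : ℝ) := integral_exp_I_mul_cos x
  have sin_sq : ∫ θ in (0 : ℝ)..2 * π, (Real.sin θ : ℂ) ^ 2 * e θ = (2 * π * J1 x : ℝ) / x := by
    rw [eq_div_iff (mod_cast hx), mul_comm, mul_integral_sin_sq_mul_exp_I_mul_cos]
  have sin_cos : ∫ θ in (0 : ℝ)..2 * π, Real.sin θ • (Real.cos θ * e θ) = 0 :=
    integral_sin_smul_comp_cos fun c => c * Complex.exp (Complex.I * (x * c : ℝ))
  refine (intervalIntegral.integral_congr fun θ _ => decomposition θ).trans ?_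
  rw [intervalIntegral.integral_add, intervalIntegral.integral_add,
    intervalIntegral.integral_const_mul, intervalIntegral.integral_const_mul,
    intervalIntegral.integral_const_mul, integral_e, sin_sq, sin_cos,
    ← dir_mul_dir_add_orthogonal φ i j]
  · push_cast
    ring
  all_goals exact Continuous.intervalIntegrable (by fun_prop) _ _

/-- The scalar factor `e^{i k r·d(θ)}` of a plane wave with wavenumber `k` and direction `d(θ)`,
as a function of the direction. -/
noncomputable def planeWave (k : ℝ) (r : Fin 2 → ℝ) (θ : ℝ) : ℂ :=
  Complex.exp (Complex.I * (k * (r 0 * Real.cos θ + r 1 * Real.sin θ) : ℝ))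

lemma continuous_planeWave (k : ℝ) (r : Fin 2 → ℝ) : Continuous (planeWave k r) := by
  unfold planeWave
  fun_prop

lemma periodic_planeWave (k : ℝ) (r : Fin 2 → ℝ) : Function.Periodic (planeWave k r) (2 * π) := by
  intro θ
  simp only [planeWave, Real.cos_add_two_pi, Real.sin_add_two_pi]

lemma planeWave_smul_dir_add (k ρ φ θ : ℝ) :
    planeWave k (ρ • dir φ) (θ + φ) = Complex.exp (Complex.I * (k * ρ * Real.cos θ : ℝ)) := by
  have phase : ρ * Real.cos φ * Real.cos (θ + φ) + ρ * Real.sin φ * Real.sin (θ + φ) =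
      ρ * Real.cos θ := by
    nth_rw 3 [← add_sub_cancel_right θ φ]
    rw [Real.cos_sub]
    ring
  simp only [planeWave, Pi.smul_apply, smul_eq_mul, dir, Matrix.cons_val_zero,
    Matrix.cons_val_one, phase, mul_assoc k]

lemma continuous_dir : Continuous dir := by
  unfold dir
  fun_prop

lemma periodic_dir : Function.Periodic dir (2 * π) := by
  intro θ
  simp only [dir, Real.cos_add_two_pi, Real.sin_add_two_pi]

lemma nrm_ne_zero {r : Fin 2 → ℝ} (hr : r ≠ 0) : nrm r ≠ 0 := by
  contrapose! hr
  rw [nrm, Real.sqrt_eq_zero (by positivity), add_eq_zero_iff_of_nonneg (sq_nonneg _)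
    (sq_nonneg _)] at hr
  ext i
  fin_cases i
  exacts [by simpa using hr.1, by simpa using hr.2]

lemma exists_eq_nrm_smul_dir (r : Fin 2 → ℝ) : ∃ φ : ℝ, r = nrm r • dir φ := by
  have norm_eq : ‖(⟨r 0, r 1⟩ : ℂ)‖ = nrm r := by
    rw [Complex.norm_def, Complex.normSq_mk, nrm, sq, sq]
  refine ⟨Complex.arg ⟨r 0, r 1⟩, ?_⟩
  ext i
  fin_cases i
  · simp [dir, ← norm_eq, Complex.norm_mul_cos_arg]
  · simp [dir, ← norm_eq, Complex.norm_mul_sin_arg]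

lemma integral_planeWave (k : ℝ) (r : Fin 2 → ℝ) :
    ∫ θ in (0 : ℝ)..2 * π, planeWave k r θ = (2 * π * J0 (k * nrm r) : ℝ) := by
  obtain ⟨φ, hφ⟩ := exists_eq_nrm_smul_dir r
  rw [← integral_comp_add_right_of_periodic (periodic_planeWave k r) φ, ← integral_exp_I_mul_cos]
  congr 1 with θ
  rw [← planeWave_smul_dir_add k (nrm r) φ, ← hφ]

lemma integral_dir_mul_dir_mul_planeWave {k : ℝ} (hk : k ≠ 0) {r : Fin 2 → ℝ} (hr : r ≠ 0)
    (i j : Fin 2) :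
    ∫ θ in (0 : ℝ)..2 * π, ((dir θ i * dir θ j : ℝ) : ℂ) * planeWave k r θ =
      (2 * π * (J1 (k * nrm r) / (k * nrm r) * (if i = j then 1 else 0) +
        (J0 (k * nrm r) - 2 * (J1 (k * nrm r) / (k * nrm r))) *
          (r i / nrm r * (r j / nrm r))) : ℝ) := by
  have hn := nrm_ne_zero hr
  obtain ⟨φ, hφ⟩ := exists_eq_nrm_smul_dir r
  have unit : ∀ i, r i / nrm r = dir φ i := fun i => by
    rw [div_eq_iff hn, mul_comm]
    exact congrFun hφ i
  have periodic : Function.Periodic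
      (fun θ => ((dir θ i * dir θ j : ℝ) : ℂ) * planeWave k r θ) (2 * π) := fun θ => by
    simp only [periodic_dir θ, periodic_planeWave k r θ]
  rw [← integral_comp_add_right_of_periodic periodic φ, unit, unit,
    ← integral_dir_mul_dir_mul_exp_I_mul_cos (mul_ne_zero hk hn)]
  congr 1 with θ
  rw [← planeWave_smul_dir_add k (nrm r) φ, ← hφ]

lemma integral_sub_dir_mul_dir_mul_planeWave {k : ℝ} (hk : k ≠ 0) {r : Fin 2 → ℝ} (hr : r ≠ 0)
    (i j : Fin 2) :
    ∫ θ in (0 : ℝ)..2 * π,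
        (((if i = j then 1 else 0) - dir θ i * dir θ j : ℝ) : ℂ) * planeWave k r θ =
      (2 * π * ((J0 (k * nrm r) - J1 (k * nrm r) / (k * nrm r)) * (if i = j then 1 else 0) -
        (J0 (k * nrm r) - 2 * (J1 (k * nrm r) / (k * nrm r))) *
          (r i / nrm r * (r j / nrm r))) : ℝ) := by
  have := continuous_planeWave k r
  have := continuous_dir
  simp only [Complex.ofReal_sub _ (_ * _), sub_mul]
  rw [intervalIntegral.integral_sub, intervalIntegral.integral_const_mul, integral_planeWave,
    integral_dir_mul_dir_mul_planeWave hk hr]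
  · push_cast
    ring
  all_goals exact Continuous.intervalIntegrable (by fun_prop) _ _

/-- `hdisp` is the dispersion relation: both sides are the squared frequency `ω²`. -/
theorem im_green_tensor_closed_form_general {μ lam kp ks : ℝ} (hμ : μ ≠ 0) (hks : ks ≠ 0)
    (hdisp : (lam + 2 * μ) * kp ^ 2 = μ * ks ^ 2) {r : Fin 2 → ℝ} (hr : r ≠ 0) (i j : Fin 2) :
    (1 / (8 * π) : ℂ) *
        ((1 / ((lam + 2 * μ : ℝ) : ℂ)) *
            (∫ θ in (0 : ℝ)..2 * π, ((dir θ i * dir θ j : ℝ) : ℂ) * planeWave kp r θ) +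
          (1 / (μ : ℂ)) *
            (∫ θ in (0 : ℝ)..2 * π,
              (((if i = j then 1 else 0) - dir θ i * dir θ j : ℝ) : ℂ) * planeWave ks r θ)) =
      (1 / (4 * μ) *
        (F1 kp ks (nrm r) * (if i = j then 1 else 0) +
          F2 kp ks (nrm r) * (r i / nrm r) * (r j / nrm r)) : ℝ) := by
  have hn := nrm_ne_zero hr
  have hkp : kp ≠ 0 := by
    rintro rfl
    simp [hμ, hks] at hdisp
  have modulus : lam + 2 * μ = μ * ks ^ 2 / kp ^ 2 := (eq_div_iff (pow_ne_zero 2 hkp)).mpr hdisp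
  rw [integral_dir_mul_dir_mul_planeWave hkp hr, integral_sub_dir_mul_dir_mul_planeWave hks hr,
    modulus, F1, F2]
  norm_cast
  field_simp
  ring

/-- The imaginary part of the free-space Green's tensor of the 2D Navier equation:
for Lamé constants `μ > 0`, `λ + μ ≥ 0`, frequency `ω > 0`, wavenumbers
`k_p = ω/√(λ+2μ)`, `k_s = ω/√μ`, and every nonzero `r ∈ ℝ²`,
`(1/(8π)) [ (1/(λ+2μ)) ∫₀^{2π} d⊗d e^{i k_p r·d} dθ + (1/μ) ∫₀^{2π} (I - d⊗d) e^{i k_s r·d} dθ ]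
  = (1/(4μ)) [ F₁(|r|) I + F₂(|r|) r̂⊗r̂ ]`, stated entrywise. -/
theorem im_green_tensor_closed_form (ω μ lam : ℝ) (hω : 0 < ω) (hμ : 0 < μ)
    (hlm : 0 ≤ lam + μ) (r : Fin 2 → ℝ) (hr : r ≠ 0) :
    ∀ i j : Fin 2,
      (1 / (8 * Real.pi) : ℂ) *
        ((1 / ((lam + 2 * μ : ℝ) : ℂ)) *
            (∫ θ in (0:ℝ)..(2 * Real.pi),
              ((dir θ i * dir θ j : ℝ) : ℂ) *
                Complex.exp (Complex.I *
                  (((ω / Real.sqrt (lam + 2 * μ)) *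
                      (r 0 * Real.cos θ + r 1 * Real.sin θ) : ℝ) : ℂ))) +
          (1 / ((μ : ℝ) : ℂ)) *
            (∫ θ in (0:ℝ)..(2 * Real.pi),
              (((if i = j then 1 else 0) - dir θ i * dir θ j : ℝ) : ℂ) *
                Complex.exp (Complex.I *
                  (((ω / Real.sqrt μ) *
                      (r 0 * Real.cos θ + r 1 * Real.sin θ) : ℝ) : ℂ)))) =
      ((1 / (4 * μ) *
          (F1 (ω / Real.sqrt (lam + 2 * μ)) (ω / Real.sqrt μ) (nrm r) *
              (if i = j then 1 else 0) +
            F2 (ω / Real.sqrt (lam + 2 * μ)) (ω / Real.sqrt μ) (nrm r) *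
              (r i / nrm r) * (r j / nrm r)) : ℝ) : ℂ) := by
  have hM : 0 < lam + 2 * μ := by linarith
  have dispersion : (lam + 2 * μ) * (ω / √(lam + 2 * μ)) ^ 2 = μ * (ω / √μ) ^ 2 := by
    rw [div_pow, div_pow, Real.sq_sqrt hM.le, Real.sq_sqrt hμ.le, mul_div_cancel₀ _ hM.ne',
      mul_div_cancel₀ _ hμ.ne']
  exact im_green_tensor_closed_form_general hμ.ne' (by positivity) dispersion hr
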